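/- Suppose there are no input names (N_I = ∅). For every computation ς, every assignment ⟨·⟩, every time t ∈ ℕ, and every function or predicate term τ, the value ⟨η(ς,t,τ)⟩ equals the evaluation of the term τ itself in the environment that interprets each output name s by ⟨η(ς,t,s)⟩ and interprets each function and predicate name by ⟨·⟩. (Unfolding a term through the computation history via η and then evaluating gives the same result as evaluating the term directly in the environment of current signal values.) -/

import Mathlib

set_option autoImplicit false

namespace TSLspec

/-- Function terms over input-signal names `I`, output-signal names `O` and
function names `F` with arities `arF`.  The constructor `init s` is the fresh
`0`-ary constant term `init_s` providing the initial value of the output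
signal `s`. -/
inductive FTerm (I O F : Type) (arF : F → ℕ) : Type where
  | inp  : I → FTerm I O F arF
  | out  : O → FTerm I O F arF
  | init : O → FTerm I O F arF
  | app  : (f : F) → (Fin (arF f) → FTerm I O F arF) → FTerm I O F arF

variable {I O F P : Type} {arF : F → ℕ} {arP : P → ℕ}

/-- Predicate terms `p(τ₀, …, τ_{n-1})`. -/
structure PTerm (I O F P : Type) (arF : F → ℕ) (arP : P → ℕ) : Type where
  pred : P
  args : Fin (arP pred) → FTerm I O F arF

/-- A computation step is a map from output names to function terms; a
computation is an infinite sequence of computation steps. -/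
abbrev Computation (I O F : Type) (arF : F → ℕ) : Type :=
  ℕ → O → FTerm I O F arF

/-- Substitute each output name `s` by `c s`. -/
def substOut (c : O → FTerm I O F arF) : FTerm I O F arF → FTerm I O F arF
  | .inp i => .inp i
  | .out s => c s
  | .init s => .init s
  | .app f a => .app f (fun k => substOut c (a k))

/-- Substitute each output name `s` by the constant `init_s`. -/
def substInit : FTerm I O F arF → FTerm I O F arF
  | .inp i => .inp i
  | .out s => .init s
  | .init s => .init s
  | .app f a => .app f (fun k => substInit (a k))

/-- The evaluation function `η`: `η(ς,t,s) = s` for input names `s`;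
`η(ς,0,s) = init_s` for output names `s`; `η(ς,t,s) = η(ς,t-1,ς(t-1)(s))` for
output names `s` and `t > 0`; and `η` commutes with applications. -/
def eta (ς : Computation I O F arF) : ℕ → FTerm I O F arF → FTerm I O F arF
  | 0, τ => substInit τ
  | t + 1, τ => eta ς t (substOut (ς t) τ)

/-- `η` applied to a predicate term (argumentwise). -/
def etaP (ς : Computation I O F arF) (t : ℕ)
    (pt : PTerm I O F P arF arP) : PTerm I O F P arF arP :=
  ⟨pt.pred, fun k => eta ς t (pt.args k)⟩

/-- An assignment `⟨·⟩`: values for input names, an `n`-ary function on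
values for each `n`-ary function name, an `n`-ary Boolean predicate on values
for each `n`-ary predicate name, and an initial value `⟨init_s⟩` for each
output name `s`. -/
structure Assignment (V I O F P : Type) (arF : F → ℕ) (arP : P → ℕ) :
    Type where
  inpVal  : I → V
  fnVal   : (f : F) → (Fin (arF f) → V) → V
  prVal   : (p : P) → (Fin (arP p) → V) → Bool
  initVal : O → V

variable {V : Type}

/-- Evaluation of a function term under an assignment, in an environment
`env` interpreting the output names.  For terms containing no output names
the result is independent of `env`. -/
def evalF (A : Assignment V I O F P arF arP) (env : O → V) :
    FTerm I O F arF → V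
  | .inp i => A.inpVal i
  | .out s => env s
  | .init s => A.initVal s
  | .app f a => A.fnVal f (fun k => evalF A env (a k))

/-- Evaluation of a predicate term. -/
def evalP (A : Assignment V I O F P arF arP) (env : O → V)
    (pt : PTerm I O F P arF arP) : Bool :=
  A.prVal pt.pred (fun k => evalF A env (pt.args k))

/-- TSL formulas. -/
inductive Formula (I O F P : Type) (arF : F → ℕ) (arP : P → ℕ) : Type where
  | predT  : PTerm I O F P arF arP → Formula I O F P arF arP
  | updT   : O → FTerm I O F arF → Formula I O F P arF arP
  | notT   : Formula I O F P arF arP → Formula I O F P arF arP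
  | andT   : Formula I O F P arF arP → Formula I O F P arF arP →
             Formula I O F P arF arP
  | nextT  : Formula I O F P arF arP → Formula I O F P arF arP
  | untilT : Formula I O F P arF arP → Formula I O F P arF arP →
             Formula I O F P arF arP

/-- TSL satisfaction `ς,t ⊨ φ` (under the assignment `A`).  A predicate term
is satisfied iff its `η`-unfolding evaluates to `true` (the unfolding
contains no output names, so the value is independent of the environment and
we quantify over all environments); an update term `[s ↜ τ]` is satisfied
iff `ς(t)(s) = τ` syntactically. -/
def Sat (A : Assignment V I O F P arF arP) (ς : Computation I O F arF) :
    Formula I O F P arF arP → ℕ → Prop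
  | .predT pt, t => ∀ env : O → V, evalP A env (etaP ς t pt) = true
  | .updT s τ, t => ς t s = τ
  | .notT ψ, t => ¬ Sat A ς ψ t
  | .andT ψ θ, t => Sat A ς ψ t ∧ Sat A ς θ t
  | .nextT ψ, t => Sat A ς ψ (t + 1)
  | .untilT θ ψ, t =>
      ∃ u, t ≤ u ∧ Sat A ς ψ u ∧ ∀ t', t ≤ t' → t' < u → Sat A ς θ t'

/-- A TSL formula is realizable iff some computation satisfies it under every
assignment (over every set of values). -/
def Realizable (φ : Formula I O F P arF arP) : Prop :=
  ∃ ς : Computation I O F arF,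
    ∀ (V : Type) (A : Assignment V I O F P arF arP), Sat A ς φ 0

/- Derived TSL operators. -/

/-- A tautology (built from the formula `θ`). -/
def tslTrue (θ : Formula I O F P arF arP) : Formula I O F P arF arP :=
  .notT (.andT θ (.notT θ))

def tslFalse (θ : Formula I O F P arF arP) : Formula I O F P arF arP :=
  .notT (tslTrue θ)

def tslOr (a b : Formula I O F P arF arP) : Formula I O F P arF arP :=
  .notT (.andT (.notT a) (.notT b))

def tslImp (a b : Formula I O F P arF arP) : Formula I O F P arF arP :=
  .notT (.andT a (.notT b))

def tslIff (a b : Formula I O F P arF arP) : Formula I O F P arF arP :=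
  .andT (tslImp a b) (tslImp b a)

/-- Finally: `F θ = true 𝒰 θ`. -/
def tslF (base θ : Formula I O F P arF arP) : Formula I O F P arF arP :=
  .untilT (tslTrue base) θ

/-- Always: `G θ = ¬ F ¬ θ`. -/
def tslG (base θ : Formula I O F P arF arP) : Formula I O F P arF arP :=
  .notT (tslF base (.notT θ))

def bigAndT (base : Formula I O F P arF arP)
    (l : List (Formula I O F P arF arP)) : Formula I O F P arF arP :=
  l.foldr .andT (tslTrue base)

def bigOrT (base : Formula I O F P arF arP)
    (l : List (Formula I O F P arF arP)) : Formula I O F P arF arP :=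
  l.foldr tslOr (tslFalse base)

end TSLspec
namespace TSLspec

/-! Unfolding through the history is one simultaneous substitution: `η(ς,t,τ)` arises from `τ` by
replacing each output name `s` by `η(ς,t,s)`. The substitution lemma for evaluation then turns the
substituted terms into the environment of their values. -/

section Substitution

variable {I O F : Type} {arF : F → ℕ}

theorem substInit_eq_substOut_init (τ : FTerm I O F arF) : substInit τ = substOut .init τ := by
  induction τ with
  | inp i => rfl
  | out s => rfl
  | init s => rfl
  | app f a ih => exact congrArg (FTerm.app f) (funext ih)

theorem substOut_substOut (c d : O → FTerm I O F arF) (τ : FTerm I O F arF) :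
    substOut d (substOut c τ) = substOut (fun s => substOut d (c s)) τ := by
  induction τ with
  | inp i => rfl
  | out s => rfl
  | init s => rfl
  | app f a ih => exact congrArg (FTerm.app f) (funext ih)

theorem eta_eq_substOut (ς : Computation I O F arF) (t : ℕ) (τ : FTerm I O F arF) :
    eta ς t τ = substOut (fun s => eta ς t (.out s)) τ := by
  induction t generalizing τ with
  | zero => exact substInit_eq_substOut_init τ
  | succ t ih =>
    calc eta ς t (substOut (ς t) τ)
      _ = substOut (fun s => eta ς t (.out s)) (substOut (ς t) τ) := ih _
      _ = substOut (fun s => substOut (fun r => eta ς t (.out r)) (ς t s)) τ :=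
        substOut_substOut _ _ τ
      _ = substOut (fun s => eta ς t (ς t s)) τ := by simp only [← ih]

end Substitution

section Evaluation

variable {V I O F P : Type} {arF : F → ℕ} {arP : P → ℕ}

theorem evalF_substOut (A : Assignment V I O F P arF arP) (env : O → V)
    (c : O → FTerm I O F arF) (τ : FTerm I O F arF) :
    evalF A env (substOut c τ) = evalF A (fun s => evalF A env (c s)) τ := by
  induction τ with
  | inp i => rfl
  | out s => rfl
  | init s => rfl
  | app f a ih => exact congrArg (A.fnVal f) (funext ih)

theorem evalF_eta (A : Assignment V I O F P arF arP) (ς : Computation I O F arF) (t : ℕ)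
    (τ : FTerm I O F arF) (env : O → V) :
    evalF A env (eta ς t τ) = evalF A (fun s => evalF A env (eta ς t (.out s))) τ := by
  rw [eta_eq_substOut, evalF_substOut]

theorem evalP_etaP (A : Assignment V I O F P arF arP) (ς : Computation I O F arF) (t : ℕ)
    (pt : PTerm I O F P arF arP) (env : O → V) :
    evalP A env (etaP ς t pt) = evalP A (fun s => evalF A env (eta ς t (.out s))) pt :=
  congrArg (A.prVal pt.pred) (funext fun k => evalF_eta A ς t (pt.args k) env)

theorem eval_eta_eq_eval_in_current_env_general (A : Assignment V I O F P arF arP)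
    (ς : Computation I O F arF) (t : ℕ) :
    (∀ (τ : FTerm I O F arF) (env : O → V),
        evalF A env (eta ς t τ) =
          evalF A (fun s => evalF A env (eta ς t (.out s))) τ) ∧
    (∀ (pt : PTerm I O F P arF arP) (env : O → V),
        evalP A env (etaP ς t pt) =
          evalP A (fun s => evalF A env (eta ς t (.out s))) pt) :=
  ⟨evalF_eta A ς t, evalP_etaP A ς t⟩

end Evaluation

/-- Assume there are no input names (`N_I = ∅`).  For every
computation `ς`, assignment `⟨·⟩`, time `t` and every function or predicate
term `τ`, the value `⟨η(ς,t,τ)⟩` equals the evaluation of `τ` itself in the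
environment interpreting each output name `s` by `⟨η(ς,t,s)⟩` (and each
function/predicate name by `⟨·⟩`). -/
theorem eval_eta_eq_eval_in_current_env {I O F P : Type} {arF : F → ℕ}
    {arP : P → ℕ} (hI : IsEmpty I) (V : Type)
    (A : Assignment V I O F P arF arP) (ς : Computation I O F arF) (t : ℕ) :
    (∀ (τ : FTerm I O F arF) (env : O → V),
        evalF A env (eta ς t τ) =
          evalF A (fun s => evalF A env (eta ς t (.out s))) τ) ∧
    (∀ (pt : PTerm I O F P arF arP) (env : O → V),
        evalP A env (etaP ς t pt) =
          evalP A (fun s => evalF A env (eta ς t (.out s))) pt) :=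
  eval_eta_eq_eval_in_current_env_general A ς t

end TSLspec
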